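/- Let tenacity(v) = t < l_m, base(v) = b, and let p be a minimum even (or odd) alternating path from b to v starting with an unmatched edge. Then every vertex of p lies in B_{b,t} ∪ {b}. -/

import Mathlib

attribute [local instance] Classical.propDecidable

variable {V : Type*} [DecidableEq V]

namespace MV

/-- A walk is alternating (w.r.t. matching `M`) in the sense used for alternating paths
starting at an unmatched vertex: the `i`-th edge is matched iff `i` is odd. -/
def IsAlt (G : SimpleGraph V) (M : G.Subgraph) {a b : V} (w : G.Walk a b) : Prop :=
  ∀ i (h : i < w.edges.length), (w.edges.get ⟨i, h⟩ ∈ M.edgeSet ↔ Odd i)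

/-- length of a minimum even alternating path from an unmatched vertex to `v`. -/
noncomputable def evenlevel (G : SimpleGraph V) (M : G.Subgraph) (v : V) : ℕ∞ :=
  sInf {n : ℕ∞ | ∃ (f : V) (w : G.Walk f v),
    f ∉ M.verts ∧ w.IsPath ∧ IsAlt G M w ∧ Even w.length ∧ n = (w.length : ℕ∞)}

/-- length of a minimum odd alternating path from an unmatched vertex to `v`. -/
noncomputable def oddlevel (G : SimpleGraph V) (M : G.Subgraph) (v : V) : ℕ∞ :=
  sInf {n : ℕ∞ | ∃ (f : V) (w : G.Walk f v),
    f ∉ M.verts ∧ w.IsPath ∧ IsAlt G M w ∧ Odd w.length ∧ n = (w.length : ℕ∞)}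

noncomputable def tenacity (G : SimpleGraph V) (M : G.Subgraph) (v : V) : ℕ∞ :=
  evenlevel G M v + oddlevel G M v

noncomputable def minlevel (G : SimpleGraph V) (M : G.Subgraph) (v : V) : ℕ∞ :=
  min (evenlevel G M v) (oddlevel G M v)

noncomputable def maxlevel (G : SimpleGraph V) (M : G.Subgraph) (v : V) : ℕ∞ :=
  max (evenlevel G M v) (oddlevel G M v)

/-- the length of a minimum length augmenting path w.r.t. `M` (`⊤` if none exists). -/
noncomputable def lm (G : SimpleGraph V) (M : G.Subgraph) : ℕ∞ :=
  sInf {n : ℕ∞ | ∃ (f g : V) (w : G.Walk f g), f ∉ M.verts ∧ g ∉ M.verts ∧ f ≠ g ∧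
    w.IsPath ∧ IsAlt G M w ∧ Odd w.length ∧ n = (w.length : ℕ∞)}

/-- `w` is a minimum even- or odd-length alternating path from an unmatched vertex to `v`
  (an `evenlevel(v)` or `oddlevel(v)` path). -/
def IsMinPathTo (G : SimpleGraph V) (M : G.Subgraph) (v f : V) (w : G.Walk f v) : Prop :=
  f ∉ M.verts ∧ w.IsPath ∧ IsAlt G M w ∧
    ((Even w.length ∧ (w.length : ℕ∞) = evenlevel G M v) ∨
     (Odd w.length ∧ (w.length : ℕ∞) = oddlevel G M v))

/-- `b` is the vertex of tenacity greater than `tenacity v` on `w` furthest from the start. -/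
def IsFurthestHigh (G : SimpleGraph V) (M : G.Subgraph) (v : V) {f v' : V}
    (w : G.Walk f v') (b : V) : Prop :=
  ∃ hb : b ∈ w.support, tenacity G M v < tenacity G M b ∧
    ∀ u, ∀ hu : u ∈ w.support, tenacity G M v < tenacity G M u →
      (w.takeUntil u hu).length ≤ (w.takeUntil b hb).length

/-- `b` is the base of `v`: the furthest higher-tenacity vertex on every minimum
even or odd alternating path to `v`. -/
def IsBase (G : SimpleGraph V) (M : G.Subgraph) (v b : V) : Prop :=
  ∀ (f : V) (w : G.Walk f v), IsMinPathTo G M v f w → IsFurthestHigh G M v w b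

/-- minimum even length alternating path from `b` to `v` starting with an unmatched edge
  (`evenlevel(b; v)`). -/
noncomputable def evenlevelFrom (G : SimpleGraph V) (M : G.Subgraph) (b v : V) : ℕ∞ :=
  sInf {n : ℕ∞ | ∃ w : G.Walk b v,
    w.IsPath ∧ IsAlt G M w ∧ Even w.length ∧ n = (w.length : ℕ∞)}

/-- minimum odd length alternating path from `b` to `v` starting with an unmatched edge
  (`oddlevel(b; v)`). -/
noncomputable def oddlevelFrom (G : SimpleGraph V) (M : G.Subgraph) (b v : V) : ℕ∞ :=
  sInf {n : ℕ∞ | ∃ w : G.Walk b v,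
    w.IsPath ∧ IsAlt G M w ∧ Odd w.length ∧ n = (w.length : ℕ∞)}

def Outer (G : SimpleGraph V) (M : G.Subgraph) (v : V) : Prop :=
  evenlevel G M v < oddlevel G M v

/-- The blossom `B_{b,t}`, defined recursively, relative to a base function `bse`. -/
noncomputable def blossom (G : SimpleGraph V) (M : G.Subgraph) (bse : V → V) :
    ℕ → V → Set V
  | 0, _ => ∅
  | 1, _ => ∅
  | (t + 2), b =>
      {v | tenacity G M v = ((t + 2 : ℕ) : ℕ∞) ∧ bse v = b} ∪
      ⋃ v ∈ {u | (u = b ∨ (tenacity G M u = ((t + 2 : ℕ) : ℕ∞) ∧ bse u = b)) ∧ Outer G M u},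
        blossom G M bse t v

/-- The nesting depth `N(B_{b,t})`. -/
noncomputable def nestDepth (G : SimpleGraph V) (M : G.Subgraph) (bse : V → V) :
    ℕ → V → ℕ
  | 0, _ => 0
  | 1, _ => 0
  | (t + 2), b =>
      if {v | tenacity G M v = ((t + 2 : ℕ) : ℕ∞) ∧ bse v = b}.Nonempty then
        1 + sSup ((fun v => nestDepth G M bse t v) ''
          {u | (u = b ∨ (tenacity G M u = ((t + 2 : ℕ) : ℕ∞) ∧ bse u = b)) ∧ Outer G M u})
      else nestDepth G M bse t b

/-- `bse` assigns to each vertex of tenacity `< l_m` its (unique) base. -/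
def BaseFn (G : SimpleGraph V) (M : G.Subgraph) (bse : V → V) : Prop :=
  ∀ v, tenacity G M v < lm G M → IsBase G M v (bse v)

/-- `u` is a predecessor of `v`: `(u,v)` is the last edge of some `minlevel(v)` path. -/
def IsPred (G : SimpleGraph V) (M : G.Subgraph) (u v : V) : Prop :=
  ∃ (f : V) (w : G.Walk f v), f ∉ M.verts ∧ w.IsPath ∧ IsAlt G M w ∧
    (w.length : ℕ∞) = minlevel G M v ∧
    0 < w.length ∧ w.getVert (w.length - 1) = u

/-- A bridge is an edge of `G` that is not a prop. -/
def IsBridge (G : SimpleGraph V) (M : G.Subgraph) (u v : V) : Prop :=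
  G.Adj u v ∧ ¬ IsPred G M u v ∧ ¬ IsPred G M v u

/-- tenacity of an edge. -/
noncomputable def edgeTenacity (G : SimpleGraph V) (M : G.Subgraph) (u v : V) : ℕ∞ :=
  if s(u, v) ∈ M.edgeSet then oddlevel G M u + oddlevel G M v + 1
  else evenlevel G M u + evenlevel G M v + 1

/-
The key fact is an exchange argument. If `p` is an alternating path from `p k` to `p n` and `q` is
an alternating path from an unmatched vertex to some vertex of `p`, then cutting `q` at its first
vertex on `p` and continuing along `p` in the direction dictated by parity reaches `p n` or `p k`.
Playing this against the definition of tenacity gives `level (p n) ≤ level (p k) + (n - k)` whenever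
`tenacity (p n) ≤ tenacity (p k)`, where the levels are those of the parities of the indices. In
particular, a minimum path is minimum up to each of its vertices whose tenacity is at least that of
its end.

Fix an odd `t < lm`. Iterating the base function from `u` up to the first vertex of tenacity greater
than `t` gives the last such vertex on every minimum path to `u`, and `u` lies in the blossom of
that vertex if `tenacity u ≤ t`. This iterated base is constant along any tail of a minimum path on
which the tenacity is at most `t`, by induction on the length of the path and on that of the tail.

Finally, a minimum path to `b` followed by the path `p` of the theorem is a minimum path to `v` on
which `b` is the last vertex of tenacity greater than `t`. So every vertex of `p` other than `b` has
tenacity at most `t` and the same iterated base as `v`, which is `b`.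
-/

section AltPath

variable {α : Type*} {G : SimpleGraph α} {M : G.Subgraph} {x p q : ℕ → α} {h i j k m n : ℕ}

/-- The vertices `x k, x (k + 1), …, x n` form an alternating path whose edge from `x i` to
`x (i + 1)` is matched iff `i` is odd. A path is encoded by a sequence on `ℕ` whose values outside
`[k, n]` are irrelevant; indices are absolute, so that segments of a path are alternating paths of
the same sequence. -/
structure IsAltPath (G : SimpleGraph α) (M : G.Subgraph) (x : ℕ → α) (k n : ℕ) : Prop where
  adj : ∀ i, k ≤ i → i < n → G.Adj (x i) (x (i + 1))
  matched_iff : ∀ i, k ≤ i → i < n → (M.Adj (x i) (x (i + 1)) ↔ Odd i)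
  injOn : Set.InjOn x (Set.Icc k n)

/-- An alternating path of length `n` starting at an unmatched vertex. -/
structure IsFreePath (G : SimpleGraph α) (M : G.Subgraph) (x : ℕ → α) (n : ℕ) : Prop
    extends IsAltPath G M x 0 n where
  free : x 0 ∉ M.verts

namespace IsAltPath

theorem mono (hx : IsAltPath G M x h n) (hi : h ≤ i) (hj : j ≤ n) : IsAltPath G M x i j where
  adj l hl hl' := hx.adj l (hi.trans hl) (hl'.trans_le hj)
  matched_iff l hl hl' := hx.matched_iff l (hi.trans hl) (hl'.trans_le hj)
  injOn := hx.injOn.mono (Set.Icc_subset_Icc hi hj)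

theorem eq_of_apply_eq (hx : IsAltPath G M x k n) (hi : k ≤ i) (hi' : i ≤ n) (hj : k ≤ j)
    (hj' : j ≤ n) (hij : x i = x j) : i = j :=
  hx.injOn ⟨hi, hi'⟩ ⟨hj, hj'⟩ hij

theorem shift (hx : IsAltPath G M x j n) (hj : j ≤ n) (hpar : Even i ↔ Even j) :
    IsAltPath G M (fun l ↦ x (l + j - i)) i (i + (n - j)) where
  adj l hl hl' := by
    have := hx.adj (l + j - i) (by omega) (by omega)
    rwa [show l + j - i + 1 = l + 1 + j - i by omega] at this
  matched_iff l hl hl' := by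
    have := hx.matched_iff (l + j - i) (by omega) (by omega)
    rw [show l + j - i + 1 = l + 1 + j - i by omega] at this
    exact this.trans (by grind)
  injOn l hl l' hl' hll' := by
    have := hx.eq_of_apply_eq (by grind) (by grind) (by grind) (by grind) hll'
    grind

theorem reverse (hx : IsAltPath G M x k j) (hk : k ≤ j) (hpar : Even i ↔ ¬ Even j) :
    IsAltPath G M (fun l ↦ x (i + j - l)) i (i + (j - k)) where
  adj l hl hl' := by
    have := hx.adj (i + j - (l + 1)) (by omega) (by omega)
    rw [show i + j - (l + 1) + 1 = i + j - l by omega] at this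
    exact this.symm
  matched_iff l hl hl' := by
    have := hx.matched_iff (i + j - (l + 1)) (by omega) (by omega)
    rw [show i + j - (l + 1) + 1 = i + j - l by omega, M.adj_comm] at this
    exact this.trans (by grind)
  injOn l hl l' hl' hll' := by
    have := hx.eq_of_apply_eq (by grind) (by grind) (by grind) (by grind) hll'
    grind

theorem append (hq : IsAltPath G M q h i) (hp : IsAltPath G M p i n) (hqp : q i = p i)
    (hdisj : ∀ a, h ≤ a → a < i → ∀ c, i ≤ c → c ≤ n → q a ≠ p c) :
    IsAltPath G M (fun l ↦ if l ≤ i then q l else p l) h n where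
  adj l hl hl' := by
    rcases lt_trichotomy l i with hli | rfl | hli
    · simpa [hli.le, Nat.succ_le_of_lt hli] using hq.adj l hl hli
    · simpa [hqp] using hp.adj l le_rfl hl'
    · simpa [hli.not_ge, (Nat.lt_succ_of_lt hli).not_ge] using hp.adj l hli.le hl'
  matched_iff l hl hl' := by
    rcases lt_trichotomy l i with hli | rfl | hli
    · simpa [hli.le, Nat.succ_le_of_lt hli] using hq.matched_iff l hl hli
    · simpa [hqp] using hp.matched_iff l le_rfl hl'
    · simpa [hli.not_ge, (Nat.lt_succ_of_lt hli).not_ge] using hp.matched_iff l hli.le hl'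
  injOn := by
    have key : ∀ a, h ≤ a → a ≤ i → ∀ c, i < c → c ≤ n → q a ≠ p c := fun a ha ha' c hc hc' hac ↦ by
      rcases ha'.eq_or_lt with rfl | ha'
      · have := hp.eq_of_apply_eq le_rfl (by omega) hc.le hc' (hqp.symm.trans hac)
        omega
      · exact hdisj a ha ha' c hc.le hc' hac
    rintro a ⟨ha, ha'⟩ c ⟨hc, hc'⟩ hac
    dsimp only at hac
    split_ifs at hac with hai hci hci
    · exact hq.eq_of_apply_eq ha hai hc hci hac
    · exact absurd hac (key a ha hai c (by omega) hc')
    · exact absurd hac.symm (key c hc hci a (by omega) ha')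
    · exact hp.eq_of_apply_eq (by omega) ha' (by omega) hc' hac

theorem exists_append (hq : IsAltPath G M q h i) (hp : IsAltPath G M p j n) (hj : j ≤ n)
    (hqp : q i = p j) (hpar : Even i ↔ Even j)
    (hdisj : ∀ a, h ≤ a → a < i → ∀ c, j ≤ c → c ≤ n → q a ≠ p c) :
    ∃ x, IsAltPath G M x h (i + (n - j)) ∧ (∀ l ≤ i, x l = q l) ∧
      ∀ l, j ≤ l → l ≤ n → x (i + (l - j)) = p l := by
  refine ⟨_, hq.append (hp.shift hj hpar) (by simp [hqp]) fun a ha ha' c hc hc' ↦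
    hdisj a ha ha' _ (by omega) (by omega), fun l hl ↦ by simp [hl], fun l hl hl' ↦ ?_⟩
  rcases hl.eq_or_lt with rfl | hl
  · simp [hqp]
  · simp only [show ¬ i + (l - j) ≤ i by omega, if_false]
    congr 1
    omega

end IsAltPath

namespace IsFreePath

theorem take (hx : IsFreePath G M x n) (hk : k ≤ n) : IsFreePath G M x k :=
  ⟨hx.toIsAltPath.mono le_rfl hk, hx.free⟩

theorem exists_append (hq : IsFreePath G M q i) (hp : IsAltPath G M p j n) (hj : j ≤ n)
    (hqp : q i = p j) (hpar : Even i ↔ Even j)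
    (hdisj : ∀ a < i, ∀ c, j ≤ c → c ≤ n → q a ≠ p c) :
    ∃ x, IsFreePath G M x (i + (n - j)) ∧ (∀ l ≤ i, x l = q l) ∧
      ∀ l, j ≤ l → l ≤ n → x (i + (l - j)) = p l := by
  obtain ⟨x, hx, hxq, hxp⟩ :=
    hq.toIsAltPath.exists_append hp hj hqp hpar fun a _ ha ↦ hdisj a ha
  exact ⟨x, ⟨hx, hxq 0 i.zero_le ▸ hq.free⟩, hxq, hxp⟩

theorem exists_append_reverse (hq : IsFreePath G M q i) (hp : IsAltPath G M p k j) (hk : k ≤ j)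
    (hqp : q i = p j) (hpar : Even i ↔ ¬ Even j)
    (hdisj : ∀ a < i, ∀ c, k ≤ c → c ≤ j → q a ≠ p c) :
    ∃ x, IsFreePath G M x (i + (j - k)) ∧ (∀ l ≤ i, x l = q l) ∧
      ∀ l, k ≤ l → l ≤ j → x (i + (j - l)) = p l := by
  obtain ⟨x, hx, hxq, hxp⟩ := hq.exists_append (hp.reverse hk hpar) (by omega) (by simp [hqp])
    Iff.rfl fun a ha c hc hc' ↦ hdisj a ha _ (by omega) (by omega)
  refine ⟨x, by simpa using hx, hxq, fun l hl hl' ↦ ?_⟩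
  have := hxp (i + (j - l)) (by omega) (by omega)
  rwa [Nat.add_sub_cancel_left, show i + j - (i + (j - l)) = l by omega] at this

end IsFreePath

theorem isAltPath_getVert {a b : α} {w : G.Walk a b} (hw : w.IsPath) (halt : IsAlt G M w) :
    IsAltPath G M w.getVert 0 w.length where
  adj i _ hi := w.adj_getVert_succ hi
  matched_iff i _ hi := by
    rw [← halt i (by simpa using hi), List.get_eq_getElem, SimpleGraph.Walk.getElem_edges]
    simp
  injOn := hw.getVert_injOn.mono fun _ hi ↦ hi.2

theorem exists_walk_of_forall_adj (hx : ∀ i < n, G.Adj (x i) (x (i + 1))) :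
    ∃ w : G.Walk (x 0) (x n), w.length = n ∧ ∀ i ≤ n, w.getVert i = x i := by
  induction n with
  | zero => exact ⟨.nil, rfl, by simp⟩
  | succ n ih =>
    obtain ⟨w, hw, hget⟩ := ih fun i hi ↦ hx i (hi.trans n.lt_succ_self)
    refine ⟨w.concat (hx n n.lt_succ_self), by simp [hw], fun i hi ↦ ?_⟩
    rcases hi.eq_or_lt with rfl | hi
    · simp [SimpleGraph.Walk.concat_eq_append, SimpleGraph.Walk.getVert_append', hw]
    · have hi : i ≤ n := by omega
      simp [SimpleGraph.Walk.concat_eq_append, SimpleGraph.Walk.getVert_append', hw, hi, hget i hi]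

theorem IsAltPath.exists_walk {a b : α} (hx : IsAltPath G M x 0 n) (ha : x 0 = a) (hb : x n = b) :
    ∃ w : G.Walk a b, w.IsPath ∧ IsAlt G M w ∧ w.length = n ∧ ∀ i ≤ n, w.getVert i = x i := by
  subst ha hb
  obtain ⟨w, hlen, hget⟩ := exists_walk_of_forall_adj fun i hi ↦ hx.adj i i.zero_le hi
  refine ⟨w, ?_, fun i hi ↦ ?_, hlen, hget⟩
  · rw [← SimpleGraph.Walk.IsPath.getVert_injOn_iff]
    intro i hi j hj hij
    simp only [Set.mem_ofPred_eq, hlen] at hi hj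
    rw [hget i hi, hget j hj] at hij
    exact hx.eq_of_apply_eq i.zero_le hi j.zero_le hj hij
  · have hi' : i < n := by simpa [hlen] using hi
    rw [← hx.matched_iff i i.zero_le hi', List.get_eq_getElem, SimpleGraph.Walk.getElem_edges,
      hget i hi'.le, hget (i + 1) hi']
    simp

/-- The `evenlevel` or the `oddlevel` of `v`, according to the parity of `k`. -/
noncomputable def level (G : SimpleGraph α) (M : G.Subgraph) (k : ℕ) (v : α) : ℕ∞ :=
  if Even k then evenlevel G M v else oddlevel G M v

/-- A minimum even or odd (according to the parity of `n`) alternating path from an unmatched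
vertex to `x n`. -/
structure IsMinPath (G : SimpleGraph α) (M : G.Subgraph) (x : ℕ → α) (n : ℕ) : Prop
    extends IsFreePath G M x n where
  level_eq : level G M n (x n) = n

theorem level_of_even (hk : Even k) (v : α) : level G M k v = evenlevel G M v := if_pos hk

theorem level_of_odd (hk : Odd k) (v : α) : level G M k v = oddlevel G M v :=
  if_neg (Nat.not_even_iff_odd.2 hk)

theorem level_congr (hpar : Even i ↔ Even j) (v : α) : level G M i v = level G M j v := by
  simp only [level, hpar]

theorem tenacity_eq_level_add_level (k : ℕ) (v : α) :
    tenacity G M v = level G M k v + level G M (k + 1) v := by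
  rcases k.even_or_odd with hk | hk
  · rw [level_of_even hk, level_of_odd hk.add_one, tenacity]
  · rw [level_of_odd hk, level_of_even hk.add_one, tenacity, add_comm]

theorem IsFreePath.level_le (hx : IsFreePath G M x n) (hpar : Even k ↔ Even n) :
    level G M k (x n) ≤ n := by
  obtain ⟨w, hw, halt, hlen, -⟩ := hx.exists_walk rfl rfl
  rw [level_congr hpar]
  rcases n.even_or_odd with hn | hn
  · rw [level_of_even hn]
    exact sInf_le ⟨x 0, w, hx.free, hw, halt, by rwa [hlen], by rw [hlen]⟩
  · rw [level_of_odd hn]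
    exact sInf_le ⟨x 0, w, hx.free, hw, halt, by rwa [hlen], by rw [hlen]⟩

theorem sInf_mem_of_ne_top {s : Set ℕ∞} (h : sInf s ≠ ⊤) : sInf s ∈ s :=
  csInf_mem (Set.nonempty_iff_ne_empty.2 fun hs ↦ h (by rw [hs, sInf_empty]))

theorem exists_walk_level_eq {v : α} (h : level G M k v ≠ ⊤) :
    ∃ (f : α) (w : G.Walk f v), f ∉ M.verts ∧ w.IsPath ∧ IsAlt G M w ∧
      (Even w.length ↔ Even k) ∧ level G M k v = w.length := by
  rcases k.even_or_odd with hk | hk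
  · rw [level_of_even hk] at h ⊢
    obtain ⟨f, w, hf, hw, halt, hpar, hlen⟩ := sInf_mem_of_ne_top h
    exact ⟨f, w, hf, hw, halt, iff_of_true hpar hk, hlen⟩
  · rw [level_of_odd hk] at h ⊢
    obtain ⟨f, w, hf, hw, halt, hpar, hlen⟩ := sInf_mem_of_ne_top h
    exact ⟨f, w, hf, hw, halt, by grind, hlen⟩

theorem exists_isMinPath {v : α} (h : level G M k v ≠ ⊤) :
    ∃ x n, IsMinPath G M x n ∧ x n = v ∧ (Even n ↔ Even k) ∧ level G M k v = n := by
  obtain ⟨f, w, hf, hw, halt, hpar, hlen⟩ := exists_walk_level_eq h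
  refine ⟨w.getVert, w.length, ⟨⟨isAltPath_getVert hw halt, by simpa using hf⟩, ?_⟩,
    w.getVert_length, hpar, hlen⟩
  rw [w.getVert_length, level_congr hpar, hlen]

theorem IsFreePath.level_le_or_level_le (hq : IsFreePath G M q m) (hp : IsAltPath G M p k n)
    (hk : k ≤ j) (hn : j ≤ n) (hqp : q m = p j) :
    level G M n (p n) ≤ (m + (n - k) : ℕ) ∨ level G M (k + 1) (p k) ≤ (m + (n - k) : ℕ) := by
  have hex : ∃ i j, k ≤ j ∧ j ≤ n ∧ q i = p j := ⟨m, j, hk, hn, hqp⟩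
  have him : Nat.find hex ≤ m := Nat.find_min' hex ⟨j, hk, hn, hqp⟩
  obtain ⟨j, hk, hn, hqp⟩ := Nat.find_spec hex
  set i := Nat.find hex
  have hdisj : ∀ a < i, ∀ c, k ≤ c → c ≤ n → q a ≠ p c :=
    fun a ha c hc hc' hac ↦ Nat.find_min hex ha ⟨c, hc, hc', hac⟩
  by_cases hpar : Even i ↔ Even j
  · obtain ⟨x, hx, -, hxp⟩ := (hq.take him).exists_append (hp.mono hk le_rfl) hn hqp hpar
      fun a ha c hc ↦ hdisj a ha c (by omega)
    rw [← hxp n hn le_rfl]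
    exact .inl ((hx.level_le (by grind)).trans (by norm_cast; omega))
  · obtain ⟨x, hx, -, hxp⟩ := (hq.take him).exists_append_reverse (hp.mono le_rfl hn) hk hqp
      (by grind) fun a ha c hc hc' ↦ hdisj a ha c hc (by omega)
    rw [← hxp k le_rfl hk]
    exact .inr ((hx.level_le (by grind)).trans (by norm_cast; omega))

theorem IsAltPath.level_le_or_level_le (hp : IsAltPath G M p k n) (hk : k ≤ j) (hn : j ≤ n)
    (i : ℕ) :
    level G M n (p n) ≤ level G M i (p j) + (n - k : ℕ) ∨
      level G M (k + 1) (p k) ≤ level G M i (p j) + (n - k : ℕ) := by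
  by_cases htop : level G M i (p j) = ⊤
  · simp [htop]
  · obtain ⟨q, m, hq, hqm, -, hlen⟩ := exists_isMinPath htop
    rw [hlen]
    exact mod_cast hq.level_le_or_level_le hp hk hn hqm

-- If the bound failed, `hk` and `hten` would make the other level of `p n` smaller than
-- `level k (p k)`, and crossing from there would reach `p n` or `p k` too early.
theorem IsAltPath.level_le_level_add (hp : IsAltPath G M p k n) (hkn : k ≤ n)
    (hten : tenacity G M (p n) ≤ tenacity G M (p k)) :
    level G M n (p n) ≤ level G M k (p k) + (n - k : ℕ) := by
  by_contra! hlt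
  have hk := (hp.level_le_or_level_le le_rfl hkn k).resolve_left hlt.not_ge
  have hn := hp.level_le_or_level_le hkn le_rfl (n + 1)
  rw [tenacity_eq_level_add_level n, tenacity_eq_level_add_level k] at hten
  generalize level G M n (p n) = a at *
  generalize level G M (n + 1) (p n) = b at *
  generalize level G M k (p k) = c at *
  generalize level G M (k + 1) (p k) = d at *
  rcases hn with hn | hn <;> enat_to_nat <;> first | omega | simp at hten

theorem IsMinPath.take_of_tenacity_le (hx : IsMinPath G M x n) (hk : k ≤ n)
    (hten : tenacity G M (x n) ≤ tenacity G M (x k)) : IsMinPath G M x k where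
  toIsFreePath := hx.take hk
  level_eq := by
    have hle := (hx.mono k.zero_le le_rfl).level_le_level_add hk hten
    refine ((hx.take hk).level_le Iff.rfl).antisymm ?_
    rw [hx.level_eq] at hle
    generalize level G M k (x k) = a at *
    enat_to_nat
    omega

theorem IsFreePath.exists_append_of_le_level (hq : IsFreePath G M q m) (hp : IsAltPath G M p k n)
    (hkn : k ≤ n) (hqp : q m = p k) (hpar : Even m ↔ Even k)
    (hten : tenacity G M (p n) ≤ tenacity G M (p k))
    (hlevel : (m + (n - k) : ℕ) ≤ level G M n (p n)) (hlevel' : m ≤ level G M (n + 1) (p n)) :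
    ∃ x, IsFreePath G M x (m + (n - k)) ∧ (∀ l ≤ m, x l = q l) ∧
      ∀ l, k ≤ l → l ≤ n → x (m + (l - k)) = p l := by
  refine hq.exists_append hp hkn hqp hpar fun a ha c hc hcn hac ↦ ?_
  have hk : level G M k (p k) ≤ m := hqp ▸ hq.level_le hpar.symm
  rcases (hq.take ha.le).level_le_or_level_le hp hc hcn hac with hn | hk'
  · have := Nat.cast_le.1 (hlevel.trans hn)
    omega
  · rw [tenacity_eq_level_add_level n, tenacity_eq_level_add_level k] at hten
    have : m + (n - k) + m ≤ m + (a + (n - k)) := by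
      exact_mod_cast (add_le_add hlevel hlevel').trans (hten.trans (add_le_add hk hk'))
    omega

-- Past `h` the path `r` can be continued by `x` after `l`. As `r h` has high tenacity, going
-- through it costs at least `level n (x n) = n`, so `r` is not shorter than `x` up to `l`.
theorem IsMinPath.take_of_disjoint {r : ℕ → α} {l : ℕ} (hx : IsMinPath G M x n) (hl : l ≤ n)
    (hr : IsMinPath G M r m) (hrx : r m = x l) (hpar : Even m ↔ Even l) (hh : h ≤ m)
    (hdisj : ∀ a, h ≤ a → a < m → ∀ c, l ≤ c → c ≤ n → r a ≠ x c)
    (hten : tenacity G M (x n) ≤ tenacity G M (r h)) : IsMinPath G M x l where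
  toIsFreePath := hx.take hl
  level_eq := by
    obtain ⟨y, hy, hyr, hyx⟩ := (hr.mono h.zero_le le_rfl).exists_append
      (hx.mono l.zero_le le_rfl) hl hrx hpar hdisj
    have hyn : y (m + (n - l)) = x n := hyx n hl le_rfl
    have hle := hy.level_le_level_add (by omega) (by rwa [hyn, hyr h hh])
    have hrh : level G M h (r h) ≤ h := (hr.take hh).level_le Iff.rfl
    rw [hyn, hyr h hh, level_congr (j := n) (by grind), hx.level_eq] at hle
    have hlm : l ≤ m := by
      have : n ≤ h + (m + (n - l) - h) := by exact_mod_cast hle.trans (add_le_add_left hrh _)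
      omega
    refine ((hx.take hl).level_le Iff.rfl).antisymm ?_
    rw [← hrx, level_congr hpar.symm, hr.level_eq]
    exact mod_cast hlm

theorem IsAltPath.matched_pred (hx : IsAltPath G M x 0 n) (hi : i ≤ n) (h0 : i ≠ 0) (hi' : Even i) :
    M.Adj (x i) (x (i - 1)) := by
  have := (hx.matched_iff (i - 1) (by omega) (by omega)).2 (by grind)
  rw [Nat.sub_add_cancel (by omega)] at this
  exact this.symm

theorem IsFreePath.ne_zero_of_matched {u : α} (hx : IsFreePath G M x n) (hu : M.Adj (x n) u) :
    n ≠ 0 := by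
  rintro rfl
  exact hx.free (M.edge_vert hu)

theorem IsFreePath.ne_of_matched {u : α} (hM : M.IsMatching) (hx : IsFreePath G M x n) (hn : Odd n)
    (hu : M.Adj (x n) u) (hi : i ≤ n) : x i ≠ u := by
  rintro rfl
  rcases i.even_or_odd with hi' | hi'
  · have h0 : i ≠ 0 := (hx.take hi).ne_zero_of_matched hu.symm
    have hmate : x (i - 1) = x n := hM.eq_of_adj_left (hx.matched_pred hi h0 hi') hu.symm
    have := hx.eq_of_apply_eq (by omega) (by omega) n.zero_le le_rfl hmate
    omega
  · rcases hi.eq_or_lt with rfl | hi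
    · exact hu.adj_sub.ne rfl
    · have hmate : x (i + 1) = x n :=
        hM.eq_of_adj_left ((hx.matched_iff i i.zero_le hi).2 hi') hu.symm
      have := hx.eq_of_apply_eq (by omega) (by omega) n.zero_le le_rfl hmate
      grind

theorem IsFreePath.snoc {u : α} (hx : IsFreePath G M x n) (hn : Odd n) (hu : M.Adj (x n) u)
    (hne : ∀ i ≤ n, x i ≠ u) : IsFreePath G M (fun i ↦ if i ≤ n then x i else u) (n + 1) where
  adj i _ hi := by
    rcases (Nat.lt_succ_iff.1 hi).eq_or_lt with rfl | hi
    · simpa using hu.adj_sub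
    · simpa [hi.le, Nat.succ_le_of_lt hi] using hx.adj i i.zero_le hi
  matched_iff i _ hi := by
    rcases (Nat.lt_succ_iff.1 hi).eq_or_lt with rfl | hi
    · simpa using iff_of_true hu hn
    · simpa [hi.le, Nat.succ_le_of_lt hi] using hx.matched_iff i i.zero_le hi
  injOn := by
    rintro i ⟨-, hi⟩ j ⟨-, hj⟩ hij
    dsimp only at hij
    split_ifs at hij with hin hjn hjn
    · exact hx.eq_of_apply_eq i.zero_le hin j.zero_le hjn hij
    · exact absurd hij (hne i hin)
    · exact absurd hij.symm (hne j hjn)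
    · omega
  free := by simpa using hx.free

theorem evenlevel_eq_oddlevel_add_one (hM : M.IsMatching) {u v : α} (huv : M.Adj u v) :
    evenlevel G M u = oddlevel G M v + 1 := by
  rw [← level_of_even Even.zero, ← level_of_odd odd_one]
  apply le_antisymm
  · by_cases htop : level G M 1 v = ⊤
    · simp [htop]
    obtain ⟨x, n, hx, rfl, hpar, hlen⟩ := exists_isMinPath htop
    have hn : Odd n := by grind
    have hy := hx.snoc hn huv.symm fun i hi ↦ hx.ne_of_matched hM hn huv.symm hi
    simpa [hlen] using hy.level_le (k := 0) (by grind)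
  · by_cases htop : level G M 0 u = ⊤
    · simp [htop]
    obtain ⟨x, n, hx, rfl, hpar, hlen⟩ := exists_isMinPath htop
    have hn : n ≠ 0 := hx.ne_zero_of_matched huv
    have hv : x (n - 1) = v :=
      hM.eq_of_adj_left (hx.matched_pred le_rfl hn (by grind)) huv
    have hle := (hx.take (Nat.sub_le n 1)).level_le (k := 1) (by grind)
    rw [hv] at hle
    calc level G M 1 v + 1 ≤ (n - 1 : ℕ) + 1 := by gcongr
      _ = level G M 0 (x n) := by rw [hlen]; norm_cast; omega

theorem tenacity_eq_of_matched (hM : M.IsMatching) {u v : α} (huv : M.Adj u v) :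
    tenacity G M u = tenacity G M v := by
  rw [tenacity, tenacity, evenlevel_eq_oddlevel_add_one hM huv,
    evenlevel_eq_oddlevel_add_one hM huv.symm]
  ring

theorem lm_le_tenacity {v : α} (hv : v ∉ M.verts) : lm G M ≤ tenacity G M v := by
  refine le_trans ?_ (le_add_self : oddlevel G M v ≤ _)
  rw [← level_of_odd odd_one]
  by_cases htop : level G M 1 v = ⊤
  · simp [htop]
  obtain ⟨f, w, hf, hw, halt, hpar, hlen⟩ := exists_walk_level_eq htop
  have hodd : Odd w.length := by grind
  rw [hlen]
  refine sInf_le ⟨f, v, w, hf, hv, ?_, hw, halt, hodd, rfl⟩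
  rintro rfl
  simp [SimpleGraph.Walk.length_eq_zero_iff.2 (SimpleGraph.Walk.isPath_iff_nil.1 hw)] at hodd

theorem exists_isMinPath_isMinPath_of_tenacity_ne_top {v : α} (hv : tenacity G M v ≠ ⊤) :
    ∃ x y : ℕ → α, ∃ e o : ℕ, IsMinPath G M x e ∧ x e = v ∧ Even e ∧ IsMinPath G M y o ∧ y o = v ∧
      Odd o ∧ tenacity G M v = (e + o : ℕ) := by
  rw [tenacity_eq_level_add_level 0] at hv
  obtain ⟨h0, h1⟩ := WithTop.add_ne_top.1 hv
  obtain ⟨x, e, hx, hxe, he, he'⟩ := exists_isMinPath h0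
  obtain ⟨y, o, hy, hyo, ho, ho'⟩ := exists_isMinPath h1
  exact ⟨x, y, e, o, hx, hxe, by grind, hy, hyo, by grind,
    by rw [tenacity_eq_level_add_level 0, he', ho', Nat.cast_add]⟩

theorem odd_of_tenacity_eq {v : α} {t : ℕ} (ht : tenacity G M v = t) : Odd t := by
  obtain ⟨-, -, e, o, -, -, he, -, -, ho, heo⟩ :=
    exists_isMinPath_isMinPath_of_tenacity_ne_top (ht.trans_ne (ENat.natCast_ne_top t))
  have : t = e + o := mod_cast ht.symm.trans heo
  grind

theorem one_lt_tenacity (hlm : 1 < lm G M) (v : α) : 1 < tenacity G M v := by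
  by_contra! hle
  obtain ⟨x, -, e, o, hx, rfl, he, -, -, ho, heo⟩ := exists_isMinPath_isMinPath_of_tenacity_ne_top
    (hle.trans_lt (ENat.natCast_lt_top 1)).ne
  have hle' : e + o ≤ 1 := mod_cast heo.symm.trans_le hle
  have he0 : e = 0 := by grind
  subst he0
  exact (hlm.trans_le (lm_le_tenacity hx.free)).not_ge hle

/-- `x i` is the last vertex of tenacity greater than `t` among `x 0, …, x n`; for a minimum path
to a vertex of tenacity `t` it is the base of that vertex. -/
structure IsLastAbove (G : SimpleGraph α) (M : G.Subgraph) (t : ℕ∞) (x : ℕ → α) (n i : ℕ) :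
    Prop where
  le : i ≤ n
  lt_tenacity : t < tenacity G M (x i)
  tenacity_le : ∀ j, i < j → j ≤ n → tenacity G M (x j) ≤ t

theorem IsFreePath.exists_isLastAbove {t : ℕ∞} (hx : IsFreePath G M x n) (ht : t < lm G M) :
    ∃ i, IsLastAbove G M t x n i :=
  ⟨_, Nat.findGreatest_le n,
    Nat.findGreatest_spec (P := fun i ↦ t < tenacity G M (x i)) n.zero_le
      (ht.trans_le (lm_le_tenacity hx.free)),
    fun _ hj hj' ↦ not_lt.1 (Nat.findGreatest_is_greatest hj hj')⟩

namespace IsLastAbove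

variable {t : ℕ∞}

theorem unique (hi : IsLastAbove G M t x n i) (hj : IsLastAbove G M t x n j) : i = j := by
  by_contra hne
  rcases Nat.lt_or_gt_of_ne hne with hij | hij
  · exact (hi.tenacity_le j hij hj.le).not_gt hj.lt_tenacity
  · exact (hj.tenacity_le i hij hi.le).not_gt hi.lt_tenacity

theorem lt (hi : IsLastAbove G M t x n i) (hn : tenacity G M (x n) ≤ t) : i < n :=
  hi.le.lt_of_ne fun hin ↦ (hin ▸ hi.lt_tenacity).not_ge hn

theorem isMinPath (hi : IsLastAbove G M t x n i) (hx : IsMinPath G M x n) : IsMinPath G M x i := by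
  rcases hi.le.eq_or_lt with rfl | hin
  · exact hx
  · exact hx.take_of_tenacity_le hi.le ((hi.tenacity_le n hin le_rfl).trans hi.lt_tenacity.le)

theorem even (hi : IsLastAbove G M t x n i) (hM : M.IsMatching) (hx : IsFreePath G M x n)
    (hin : i < n) : Even i := by
  by_contra hodd
  have hmate := (hx.matched_iff i i.zero_le hin).2 (Nat.not_even_iff_odd.1 hodd)
  refine hi.lt_tenacity.not_ge ?_
  rw [tenacity_eq_of_matched hM hmate]
  exact hi.tenacity_le (i + 1) i.lt_succ_self hin

end IsLastAbove

theorem IsMinPath.isMinPathTo {w : G.Walk (x 0) (x n)} (hx : IsMinPath G M x n) (hw : w.IsPath)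
    (halt : IsAlt G M w) (hlen : w.length = n) : IsMinPathTo G M (x n) (x 0) w := by
  refine ⟨hx.free, hw, halt, ?_⟩
  rw [hlen]
  rcases n.even_or_odd with hn | hn
  · exact .inl ⟨hn, by rw [← level_of_even hn, hx.level_eq]⟩
  · exact .inr ⟨hn, by rw [← level_of_odd hn, hx.level_eq]⟩

/-- The first vertex of tenacity greater than `t` among `u, bse u, bse (bse u), …`, when `t` is odd,
`t < lm` and `bse` is a base function. Its recursion is that of `blossom`, and a vertex `u` of
tenacity at most `t` lies in `blossom t c` for `c = iterBase t u`. -/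
noncomputable def iterBase (G : SimpleGraph α) (M : G.Subgraph) (bse : α → α) : ℕ → α → α
  | 0, u => u
  | 1, u => u
  | t + 2, u =>
    if tenacity G M (iterBase G M bse t u) = (t + 2 : ℕ) then bse (iterBase G M bse t u)
    else iterBase G M bse t u

theorem add_two_lt_tenacity {t : ℕ} {u : α} (ht : Odd t) (hlt : t < tenacity G M u)
    (hne : tenacity G M u ≠ (t + 2 : ℕ)) : (t + 2 : ℕ) < tenacity G M u := by
  by_cases htop : tenacity G M u = ⊤
  · rw [htop]
    exact ENat.natCast_lt_top _
  obtain ⟨s, hs⟩ := ENat.ne_top_iff_exists.1 htop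
  have hodd := odd_of_tenacity_eq hs.symm
  rw [← hs] at hlt hne ⊢
  norm_cast at *
  grind

theorem iterBase_of_lt_tenacity {bse : α → α} {t : ℕ} {u : α} (hu : t < tenacity G M u) :
    iterBase G M bse t u = u := by
  induction t using Nat.twoStepInduction with
  | zero => rfl
  | one => rfl
  | more t ih _ =>
    have hu' : t < tenacity G M u := (Nat.cast_le.2 (by omega)).trans_lt hu
    rw [iterBase, ih hu', if_neg hu.ne']

theorem IsAltPath.exists_walk_of_even {a b : α} (hx : IsAltPath G M x i n) (hin : i ≤ n)
    (hi : Even i) (ha : x i = a) (hb : x n = b) :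
    ∃ w : G.Walk a b, w.IsPath ∧ IsAlt G M w ∧ w.length = n - i := by
  have htail : IsAltPath G M (fun l ↦ x (l + i)) 0 (n - i) := by
    simpa using hx.shift (i := 0) hin (by simpa using hi)
  obtain ⟨w, hw, halt, hlen, -⟩ := htail.exists_walk (by simpa using ha)
    (by simpa [Nat.sub_add_cancel hin] using hb)
  exact ⟨w, hw, halt, hlen⟩

theorem length_le_of_eq_levelFrom {a b : α} {w₀ w : G.Walk a b}
    (hmin : (Even w₀.length ∧ (w₀.length : ℕ∞) = evenlevelFrom G M a b) ∨
      (Odd w₀.length ∧ (w₀.length : ℕ∞) = oddlevelFrom G M a b))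
    (hw : w.IsPath) (halt : IsAlt G M w) (hpar : Even w.length ↔ Even w₀.length) :
    w₀.length ≤ w.length := by
  rw [← Nat.cast_le (α := ℕ∞)]
  rcases hmin with ⟨heven, hlen⟩ | ⟨hodd, hlen⟩
  · exact hlen.trans_le (sInf_le ⟨w, hw, halt, hpar.2 heven, rfl⟩)
  · exact hlen.trans_le (sInf_le ⟨w, hw, halt, by grind, rfl⟩)

end AltPath

section Base

variable {α : Type*} [DecidableEq α] {G : SimpleGraph α} {M : G.Subgraph} {bse : α → α}
  {x : ℕ → α} {i m n t : ℕ} {u v b : α}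

theorem IsLastAbove.apply_eq_of_isBase (hi : IsLastAbove G M (tenacity G M (x n)) x n i)
    (hx : IsMinPath G M x n) (hb : IsBase G M (x n) b) : x i = b := by
  obtain ⟨w, hw, halt, hlen, hget⟩ := hx.exists_walk rfl rfl
  have apply_takeUntil : ∀ u (hu : u ∈ w.support),
      (w.takeUntil u hu).length ≤ n ∧ x (w.takeUntil u hu).length = u := fun u hu ↦ by
    have hle : (w.takeUntil u hu).length ≤ n :=
      (w.length_takeUntil_le_length hu).trans_eq hlen
    exact ⟨hle, by rw [← hget _ hle, SimpleGraph.Walk.getVert_length_takeUntil]⟩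
  obtain ⟨hbw, hlt, hfurthest⟩ := hb _ w (hx.isMinPathTo hw halt hlen)
  obtain ⟨hdn, hd⟩ := apply_takeUntil b hbw
  have hiw : x i ∈ w.support := hget i hi.le ▸ w.getVert_mem_support i
  obtain ⟨hen, he⟩ := apply_takeUntil (x i) hiw
  have hei := hx.eq_of_apply_eq (Nat.zero_le _) hen i.zero_le hi.le he
  have hle := hfurthest _ hiw hi.lt_tenacity
  rw [hei] at hle
  rcases hle.eq_or_lt with heq | hlt'
  · rw [heq, hd]
  · exact absurd (hi.tenacity_le _ hlt' hdn) (by rw [hd]; exact hlt.not_ge)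

theorem IsMinPath.isLastAbove_of_isBase (hx : IsMinPath G M x n) (hi : i ≤ n)
    (hlm : tenacity G M (x n) < lm G M) (hb : IsBase G M (x n) (x i)) :
    IsLastAbove G M (tenacity G M (x n)) x n i := by
  obtain ⟨j, hj⟩ := hx.exists_isLastAbove hlm
  obtain rfl :=
    hx.eq_of_apply_eq j.zero_le hj.le i.zero_le hi (hj.apply_eq_of_isBase hx hb)
  exact hj

theorem IsLastAbove.apply_eq_iterBase (hbse : BaseFn G M bse) (ht : Odd t) (htlm : t < lm G M)
    (hx : IsMinPath G M x n) (hi : IsLastAbove G M t x n i) :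
    x i = iterBase G M bse t (x n) := by
  induction t using Nat.twoStepInduction generalizing i with
  | zero => simp at ht
  | one =>
    have hin : ¬ i < n := fun hin ↦
      (hi.tenacity_le n hin le_rfl).not_gt (one_lt_tenacity htlm (x n))
    rw [hi.le.antisymm (not_lt.1 hin), iterBase]
  | more t ih _ =>
    have ht' : Odd t := by grind
    have hlt : (t : ℕ∞) < (t + 2 : ℕ) := Nat.cast_lt.2 (by omega)
    obtain ⟨j, hj⟩ := hx.exists_isLastAbove (hlt.trans htlm)
    rw [iterBase, ← ih ht' (hlt.trans htlm) hj]
    have hij : i ≤ j := by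
      by_contra! hji
      exact (hj.tenacity_le i hji hi.le).not_gt (hlt.trans hi.lt_tenacity)
    split_ifs with hten
    · have hi' : IsLastAbove G M (tenacity G M (x j)) x j i :=
        ⟨hij, hten ▸ hi.lt_tenacity, fun l hl hlj ↦ hten ▸ hi.tenacity_le l hl (hlj.trans hj.le)⟩
      exact hi'.apply_eq_of_isBase (hj.isMinPath hx) (hbse _ (hten ▸ htlm))
    · exact congrArg x <| hi.unique ⟨hj.le, add_two_lt_tenacity ht' hj.lt_tenacity hten,
        fun l hl hln ↦ (hj.tenacity_le l hl hln).trans hlt.le⟩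

theorem lt_tenacity_iterBase (hbse : BaseFn G M bse) (ht : Odd t) (htlm : t < lm G M) (u : α) :
    t < tenacity G M (iterBase G M bse t u) := by
  by_cases hu : t < tenacity G M u
  · rwa [iterBase_of_lt_tenacity hu]
  obtain ⟨x, -, n, -, hx, rfl, -⟩ := exists_isMinPath_isMinPath_of_tenacity_ne_top
    ((not_lt.1 hu).trans_lt (ENat.natCast_lt_top t)).ne
  obtain ⟨i, hi⟩ := hx.exists_isLastAbove htlm
  rw [← hi.apply_eq_iterBase hbse ht htlm hx]
  exact hi.lt_tenacity

theorem evenlevel_iterBase_lt_level (hM : M.IsMatching) (hbse : BaseFn G M bse) (ht : Odd t)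
    (htlm : t < lm G M) (hu : tenacity G M u ≤ t) (k : ℕ) :
    evenlevel G M (iterBase G M bse t u) < level G M k u := by
  have htop : level G M k u ≠ ⊤ := by
    refine ne_top_of_le_ne_top (ENat.natCast_ne_top t) (le_trans ?_ hu)
    rw [tenacity_eq_level_add_level k]
    exact le_self_add
  obtain ⟨x, n, hx, rfl, -, hlen⟩ := exists_isMinPath htop
  obtain ⟨i, hi⟩ := hx.exists_isLastAbove htlm
  have hin : i < n := hi.lt hu
  rw [← hi.apply_eq_iterBase hbse ht htlm hx, hlen,
    ← level_of_even (hi.even hM hx.toIsFreePath hin), (hi.isMinPath hx).level_eq]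
  exact mod_cast hin

theorem outer_iterBase (hM : M.IsMatching) (hbse : BaseFn G M bse) (ht : Odd t)
    (htlm : t < lm G M) (hu : tenacity G M u ≤ t) : Outer G M (iterBase G M bse t u) := by
  have heven := evenlevel_iterBase_lt_level hM hbse ht htlm hu 0
  have hodd := evenlevel_iterBase_lt_level hM hbse ht htlm hu 1
  rw [level_of_even Even.zero] at heven
  rw [level_of_odd odd_one] at hodd
  refine lt_of_not_ge fun hle ↦ (lt_tenacity_iterBase hbse ht htlm u).not_ge ?_
  calc tenacity G M (iterBase G M bse t u) ≤ tenacity G M u :=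
        add_le_add heven.le (hle.trans hodd.le)
    _ ≤ t := hu

theorem mem_blossom_iterBase (hM : M.IsMatching) (hbse : BaseFn G M bse) (ht : Odd t)
    (htlm : t < lm G M) (hu : tenacity G M u ≤ t) :
    u ∈ blossom G M bse t (iterBase G M bse t u) := by
  induction t using Nat.twoStepInduction with
  | zero => simp at ht
  | one => exact absurd (one_lt_tenacity htlm u) hu.not_gt
  | more t ih _ =>
    have ht' : Odd t := by grind
    have htlm' : (t : ℕ∞) < lm G M := (Nat.cast_lt.2 (by omega)).trans htlm
    rw [blossom, iterBase]
    by_cases hlt : t < tenacity G M u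
    · have hten : tenacity G M u = (t + 2 : ℕ) := by
        by_contra hne
        exact (add_two_lt_tenacity ht' hlt hne).not_ge hu
      rw [iterBase_of_lt_tenacity hlt, if_pos hten]
      exact .inl ⟨hten, rfl⟩
    · have hu' := not_lt.1 hlt
      refine .inr (Set.mem_biUnion ⟨?_, outer_iterBase hM hbse ht' htlm' hu'⟩ (ih ht' htlm' hu'))
      split_ifs with hten
      · exact .inr ⟨hten, rfl⟩
      · exact .inl rfl

theorem IsMinPath.iterBase_eq_of_isMinPath (hbse : BaseFn G M bse) (ht : Odd t) (htlm : t < lm G M)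
    (hxm : IsMinPath G M x m) (hxn : IsMinPath G M x n) (hmn : m ≤ n)
    (hten : ∀ l, m < l → l ≤ n → tenacity G M (x l) ≤ t) :
    iterBase G M bse t (x m) = iterBase G M bse t (x n) := by
  obtain ⟨i, hi⟩ := hxm.exists_isLastAbove htlm
  have hi' : IsLastAbove G M t x n i := ⟨hi.le.trans hmn, hi.lt_tenacity, fun l hl hln ↦
    (le_or_gt l m).elim (hi.tenacity_le l hl) fun hml ↦ hten l hml hln⟩
  rw [← hi.apply_eq_iterBase hbse ht htlm hxm, ← hi'.apply_eq_iterBase hbse ht htlm hxn]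

-- If `x i` and `x n` had different iterated bases, the part of a minimum path to `x i` after its
-- last high vertex would avoid the tail of `x`, so the initial segment of `x` would be minimum.
theorem IsMinPath.iterBase_eq_of_forall_lt (hbse : BaseFn G M bse) (ht : Odd t) (htlm : t < lm G M)
    (hshort : ∀ y m, m < n → IsMinPath G M y m → ∀ j ≤ m,
      (∀ l, j ≤ l → l ≤ m → tenacity G M (y l) ≤ t) →
      iterBase G M bse t (y j) = iterBase G M bse t (y m))
    (hx : IsMinPath G M x n) (hin : i < n) (hten : ∀ l, i ≤ l → l ≤ n → tenacity G M (x l) ≤ t)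
    (htail : ∀ l, i < l → l ≤ n → iterBase G M bse t (x l) = iterBase G M bse t (x n)) :
    iterBase G M bse t (x i) = iterBase G M bse t (x n) := by
  by_contra hne
  have hle := (hx.take hin.le).level_le Iff.rfl
  obtain ⟨r, m, hr, hrx, hpar, hlen⟩ := exists_isMinPath (ne_top_of_le_ne_top (by simp) hle)
  have hmi : m ≤ i := by rwa [hlen, Nat.cast_le] at hle
  obtain ⟨h, hh⟩ := hr.exists_isLastAbove htlm
  have hbase : r h = iterBase G M bse t (x i) := hrx ▸ hh.apply_eq_iterBase hbse ht htlm hr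
  have hsegment : ∀ a, h ≤ a → a ≤ m → iterBase G M bse t (r a) = iterBase G M bse t (x i) := by
    intro a ha ham
    rcases ha.eq_or_lt with rfl | ha
    · rw [iterBase_of_lt_tenacity hh.lt_tenacity, hbase]
    · rw [hshort r m (by omega) hr a ham fun l hl hlm ↦ hh.tenacity_le l (by omega) hlm, hrx]
  have hdisj : ∀ a, h ≤ a → a < m → ∀ c, i ≤ c → c ≤ n → r a ≠ x c := by
    intro a ha ham c hc hcn hac
    rcases hc.eq_or_lt with rfl | hc
    · exact ham.ne (hr.eq_of_apply_eq a.zero_le ham.le m.zero_le le_rfl (hac.trans hrx.symm))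
    · exact hne ((hsegment a ha ham.le).symm.trans (hac ▸ htail c hc hcn))
  have hxi : IsMinPath G M x i := hx.take_of_disjoint hin.le hr hrx hpar hh.le hdisj
    ((hten n hin.le le_rfl).trans hh.lt_tenacity.le)
  exact hne (hxi.iterBase_eq_of_isMinPath hbse ht htlm hx hin.le fun l hl ↦ hten l hl.le)

theorem IsMinPath.iterBase_eq (hbse : BaseFn G M bse) (ht : Odd t) (htlm : t < lm G M)
    (hx : IsMinPath G M x n) (hi : i ≤ n) (hten : ∀ l, i ≤ l → l ≤ n → tenacity G M (x l) ≤ t) :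
    iterBase G M bse t (x i) = iterBase G M bse t (x n) := by
  induction n using Nat.strong_induction_on generalizing x i with
  | _ n ihn =>
    induction hd : n - i using Nat.strong_induction_on generalizing i with
    | _ d ihd =>
      rcases hi.eq_or_lt with rfl | hin
      · rfl
      · exact hx.iterBase_eq_of_forall_lt hbse ht htlm
          (fun y m hmn hy j hj hten ↦ ihn m hmn hy hj hten) hin hten fun l hl hln ↦
            ihd (n - l) (by omega) hln (fun a ha ↦ hten a (by omega)) rfl

variable {p : G.Walk b v}

theorem exists_isMinPath_extending (hM : M.IsMatching) (hbse : BaseFn G M bse)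
    (ht : tenacity G M v = t) (htlm : t < lm G M) (hbase : IsBase G M v b)
    (hp : p.IsPath) (halt : IsAlt G M p)
    (hmin : ∀ w : G.Walk b v, w.IsPath → IsAlt G M w → (Even w.length ↔ Even p.length) →
      p.length ≤ w.length) :
    ∃ x i, IsMinPath G M x (i + p.length) ∧ IsLastAbove G M t x (i + p.length) i ∧
      ∀ l ≤ p.length, x (i + l) = p.getVert l := by
  have htop : level G M p.length v ≠ ⊤ := by
    intro htop
    simp [tenacity_eq_level_add_level p.length v, htop] at ht
  obtain ⟨q, n, hq, rfl, hpar, hlen⟩ := exists_isMinPath htop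
  obtain ⟨i, hi⟩ := hq.exists_isLastAbove htlm
  have hin : i < n := hi.lt ht.le
  have heven : Even i := hi.even hM hq.toIsFreePath hin
  have hqi : q i = b := IsLastAbove.apply_eq_of_isBase (ht ▸ hi) hq hbase
  have hshort : p.length ≤ n - i := by
    obtain ⟨w, hw, halt', hwlen⟩ :=
      (hq.mono i.zero_le le_rfl).exists_walk_of_even hin.le heven hqi rfl
    exact hwlen ▸ hmin w hw halt' (by grind)
  have hlt : i < level G M (p.length + 1) (q n) := by
    have := evenlevel_iterBase_lt_level hM hbse (odd_of_tenacity_eq ht) htlm ht.le (p.length + 1)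
    rwa [← hi.apply_eq_iterBase hbse (odd_of_tenacity_eq ht) htlm hq, ← level_of_even heven,
      (hi.isMinPath hq).level_eq] at this
  have hle : (i + p.length : ℕ) ≤ level G M p.length (q n) := by
    rw [hlen]
    exact mod_cast (by omega : i + p.length ≤ n)
  obtain ⟨x, hx, hxq, hxp⟩ := (hq.take hin.le).exists_append_of_le_level
    (isAltPath_getVert hp halt) p.length.zero_le (by simpa using hqi) (by simpa using heven)
    (by simpa [← hqi, ht] using hi.lt_tenacity.le) (by simpa using hle) (by simpa using hlt.le)
  simp only [Nat.sub_zero] at hx hxp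
  have hxn : x (i + p.length) = q n := by simpa using hxp p.length p.length.zero_le le_rfl
  have hxi : x i = b := (hxq i le_rfl).trans hqi
  have hxmin : IsMinPath G M x (i + p.length) :=
    ⟨hx, (hx.level_le Iff.rfl).antisymm (by rwa [hxn, level_congr (j := p.length) (by grind)])⟩
  have hlast := hxmin.isLastAbove_of_isBase (Nat.le_add_right _ _) (by rwa [hxn, ht])
    (by rwa [hxn, hxi])
  rw [hxn, ht] at hlast
  exact ⟨x, i, hxmin, hlast, fun l hl ↦ hxp l l.zero_le hl⟩

end Base

/-- Every vertex of a minimum even (or odd) alternating path from `b = base(v)` to `v`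
starting with an unmatched edge lies in `B_{b,t} ∪ {b}`, where `t = tenacity(v) < l_m`. -/
theorem stmt12 (G : SimpleGraph V) (M : G.Subgraph) (hM : M.IsMatching)
    (bse : V → V) (hbse : BaseFn G M bse)
    (v b : V) (t : ℕ) (ht : tenacity G M v = (t : ℕ∞)) (hlm : (t : ℕ∞) < lm G M)
    (hbase : IsBase G M v b) (hbv : bse v = b)
    (p : G.Walk b v) (hp : p.IsPath) (halt : IsAlt G M p)
    (hmin : (Even p.length ∧ (p.length : ℕ∞) = evenlevelFrom G M b v) ∨
            (Odd p.length ∧ (p.length : ℕ∞) = oddlevelFrom G M b v)) :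
    ∀ u ∈ p.support, u ∈ insert b (blossom G M bse t b) := by
  intro u hu
  have hodd := odd_of_tenacity_eq ht
  obtain ⟨x, i, hx, hi, hxp⟩ := exists_isMinPath_extending hM hbse ht hlm hbase hp halt
    fun w ↦ length_le_of_eq_levelFrom hmin
  obtain ⟨l, rfl, hl⟩ := SimpleGraph.Walk.mem_support_iff_exists_getVert.1 hu
  rcases l.eq_zero_or_pos with rfl | hpos
  · simp
  have htail : ∀ j, i + l ≤ j → j ≤ i + p.length → tenacity G M (x j) ≤ t :=
    fun j hj ↦ hi.tenacity_le j (by omega)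
  have hb : iterBase G M bse t (p.getVert l) = b := by
    calc iterBase G M bse t (p.getVert l) = iterBase G M bse t (x (i + l)) := by rw [hxp l hl]
      _ = iterBase G M bse t (x (i + p.length)) := hx.iterBase_eq hbse hodd hlm (by omega) htail
      _ = x i := (hi.apply_eq_iterBase hbse hodd hlm hx).symm
      _ = b := by simpa using hxp 0 (Nat.zero_le _)
  have hmem := mem_blossom_iterBase hM hbse hodd hlm (hxp l hl ▸ htail (i + l) le_rfl (by omega))
  rw [hb] at hmem
  exact .inr hmem

end MV
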